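/- arXiv:1411.0645 — 2 statements merged into one kernel-verified Lean document; each statement's English description precedes it below -/
import Mathlib

section
/- Let 0 < p < +∞ and q = +∞. Let μ and ν be non-negative Borel measures on I = (a,b) ⊆ ℝ, let w ∈ B⁺(I), and let u ∈ B⁺(I) satisfy ‖u‖_{∞,[t,b),ν} < ∞ for all t ∈ I and u ≠ 0 ν-a.e. on (a,b). Then there exists a constant c > 0 such that ‖gw‖_{p,(a,b),μ} ≤ c ‖u(x) ‖g‖_{∞,(a,x),μ}‖_{∞,(a,b),ν} for all g ∈ B⁺(I) if and only if B₃ := ( ∫_{(a,b)} ( w(x) / ‖u‖_{∞,(x,b),ν} )^p dμ(x) )^{1/p} < ∞. Moreover, the best possible constant c satisfies c ≈ B₃. -/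
/-!
The best constant is exactly `B₃`, so both comparison constants can be taken equal to `1`.
Write `U x = ‖u‖_{∞,(x,b),ν}`, an antitone function, `G x = ‖g‖_{∞,(a,x),μ}`, and `R` for the
right-hand norm `‖u G‖_{∞,(a,b),ν}`.

* Upper bound: for `μ`-a.e. `t` one has `g t ≤ G x` for every `x > t` (`ae_le_eSup_left`), so
  `g t * U t ≤ ‖u G‖_{∞,(t,b),ν} ≤ R`. Hence `g w ≤ R · (w / U)` almost everywhere, where finiteness
  of `B₃` disposes of the points with `U = 0` (there `w` must vanish), and one integrates.
* Lower bound: test with `g = 1 / U`. For `ν`-a.e. `x` one has `u x ≤ U t` for every `t < x`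
  (`ae_le_eSup_right`), so `G x ≤ 1 / u x`. Therefore `R ≤ 1`, while the left-hand side is `B₃`.
-/

open MeasureTheory Set ENNReal

noncomputable section

/-- The `μ`-essential supremum of `f` over `E`:
`‖f‖_{∞,E,μ} = sup {α : μ({y ∈ E : f y ≥ α}) > 0}`. -/
def eSup (μ : Measure ℝ) (E : Set ℝ) (f : ℝ → ℝ≥0∞) : ℝ≥0∞ :=
  sSup {α : ℝ≥0∞ | 0 < μ {y | y ∈ E ∧ α ≤ f y}}

/-- `‖f‖_{p,E,μ}` for `0 < p ≤ ∞`. -/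
def Nrm (p : ℝ≥0∞) (μ : Measure ℝ) (E : Set ℝ) (f : ℝ → ℝ≥0∞) : ℝ≥0∞ :=
  if p = ⊤ then eSup μ E f
  else (∫⁻ x in E, f x ^ p.toReal ∂μ) ^ (1 / p.toReal)

/-- `‖u(x) ‖g‖_{∞,(a,x),μ}‖_{q,(a,b),ν}`. -/
def RHSdual (q : ℝ≥0∞) (a b : ℝ) (μ ν : Measure ℝ) (u g : ℝ → ℝ≥0∞) : ℝ≥0∞ :=
  Nrm q ν (Ioo a b) (fun x => u x * eSup μ (Ioo a x) g)

/-- The best constant in the inequality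
`‖gw‖_{p,(a,b),μ} ≤ c ‖u(x) ‖g‖_{∞,(a,x),μ}‖_{q,(a,b),ν}` over all `g ∈ B⁺((a,b))`. -/
def bestCdual (p q : ℝ≥0∞) (a b : ℝ) (μ ν : Measure ℝ) (w u : ℝ → ℝ≥0∞) : ℝ≥0∞ :=
  sInf {c : ℝ≥0∞ | ∀ g : ℝ → ℝ≥0∞, Measurable g →
    Nrm p μ (Ioo a b) (fun t => g t * w t) ≤ c * RHSdual q a b μ ν u g}

lemma eSup_mul_le {μ : Measure ℝ} {E : Set ℝ} {f : ℝ → ℝ≥0∞} {k C : ℝ≥0∞}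
    (h : ∀ᵐ x ∂μ, x ∈ E → f x * k ≤ C) : eSup μ E f * k ≤ C := by
  unfold eSup
  rw [ENNReal.sSup_mul]
  refine iSup₂_le fun α (hα : 0 < μ {y | y ∈ E ∧ α ≤ f y}) => ?_
  obtain ⟨y, ⟨hyE, hy⟩, hyC⟩ :=
    ((frequently_ae_mem_iff.2 hα.ne').and_eventually h).exists
  exact (mul_le_mul_left hy k).trans (hyC hyE)

lemma eSup_le {μ : Measure ℝ} {E : Set ℝ} {f : ℝ → ℝ≥0∞} {C : ℝ≥0∞}
    (h : ∀ᵐ x ∂μ, x ∈ E → f x ≤ C) : eSup μ E f ≤ C := by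
  simpa using eSup_mul_le (k := 1) (by simpa using h)

lemma eSup_mono_set {μ : Measure ℝ} {E F : Set ℝ} (f : ℝ → ℝ≥0∞) (h : E ⊆ F) :
    eSup μ E f ≤ eSup μ F f :=
  sSup_le_sSup fun α (hα : 0 < μ {y | y ∈ E ∧ α ≤ f y}) =>
    hα.trans_le (measure_mono fun _ hy => And.intro (h hy.1) hy.2)

lemma ae_le_eSup (μ : Measure ℝ) {E : Set ℝ} (hE : MeasurableSet E) (f : ℝ → ℝ≥0∞) :
    ∀ᵐ x ∂μ, x ∈ E → f x ≤ eSup μ E f := by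
  rw [← ae_restrict_iff' hE]
  have key : essSup f (μ.restrict E) ≤ eSup μ E f := by
    by_contra! hlt
    obtain ⟨r, hr, hr'⟩ := exists_between hlt
    -- A level `r` above the supremum is attained only on a null set.
    have hnull : μ {y | y ∈ E ∧ r ≤ f y} = 0 := by
      by_contra hne
      exact absurd (le_sSup (show r ∈ {α : ℝ≥0∞ | 0 < μ {y | y ∈ E ∧ α ≤ f y}} from
        pos_iff_ne_zero.2 hne)) (not_le.2 hr)
    have hae : ∀ᵐ x ∂μ.restrict E, f x ≤ r := by
      rw [ae_restrict_iff' hE]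
      filter_upwards [measure_eq_zero_iff_ae_notMem.1 hnull] with x hx hxE
      by_contra! hc
      exact hx ⟨hxE, hc.le⟩
    exact absurd (essSup_le_of_ae_le r hae) (not_le.2 hr')
  filter_upwards [ENNReal.ae_le_essSup f] with x hx using hx.trans key

/-- The exceptional null set does not depend on `x`: by monotonicity in `x`, rational endpoints
suffice. -/
lemma ae_le_eSup_left (μ : Measure ℝ) (a : ℝ) (g : ℝ → ℝ≥0∞) :
    ∀ᵐ t ∂μ, a < t → ∀ x, t < x → g t ≤ eSup μ (Ioo a x) g := by
  have h : ∀ᵐ t ∂μ, ∀ q : ℚ, t ∈ Ioo a (q : ℝ) → g t ≤ eSup μ (Ioo a (q : ℝ)) g :=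
    ae_all_iff.2 fun q => ae_le_eSup μ measurableSet_Ioo g
  filter_upwards [h] with t ht hat x hx
  obtain ⟨q, hq, hq'⟩ := exists_rat_btwn hx
  exact (ht q ⟨hat, hq⟩).trans (eSup_mono_set g (Ioo_subset_Ioo_right hq'.le))

/-- Mirror image of `ae_le_eSup_left`. -/
lemma ae_le_eSup_right (ν : Measure ℝ) (b : ℝ) (u : ℝ → ℝ≥0∞) :
    ∀ᵐ x ∂ν, x < b → ∀ t, t < x → u x ≤ eSup ν (Ioo t b) u := by
  have h : ∀ᵐ x ∂ν, ∀ q : ℚ, x ∈ Ioo (q : ℝ) b → u x ≤ eSup ν (Ioo (q : ℝ) b) u :=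
    ae_all_iff.2 fun q => ae_le_eSup ν measurableSet_Ioo u
  filter_upwards [h] with x hx hxb t ht
  obtain ⟨q, hq, hq'⟩ := exists_rat_btwn ht
  exact (hx q ⟨hq', hxb⟩).trans (eSup_mono_set u (Ioo_subset_Ioo_left hq.le))

lemma measurable_eSup_Ioo (ν : Measure ℝ) (b : ℝ) (u : ℝ → ℝ≥0∞) :
    Measurable fun x => eSup ν (Ioo x b) u :=
  Antitone.measurable fun _ _ h => eSup_mono_set u (Ioo_subset_Ioo_left h)

/-- Upper bound for the best constant: a finite `B₃` is admissible. -/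
lemma upper_bound {p : ℝ≥0∞} (hp : 0 < p) (hp' : p ≠ ⊤) {a b : ℝ} {μ ν : Measure ℝ}
    {w u : ℝ → ℝ≥0∞} (hw : Measurable w)
    (hu : ∀ t ∈ Ioo a b, eSup ν (Ico t b) u < ⊤)
    (hB : (∫⁻ x in Ioo a b, (w x / eSup ν (Ioo x b) u) ^ p.toReal ∂μ) ^ (1 / p.toReal) < ⊤)
    (g : ℝ → ℝ≥0∞) :
    Nrm p μ (Ioo a b) (fun t => g t * w t) ≤
      (∫⁻ x in Ioo a b, (w x / eSup ν (Ioo x b) u) ^ p.toReal ∂μ) ^ (1 / p.toReal) *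
        RHSdual ⊤ a b μ ν u g := by
  have hr : 0 < p.toReal := ENNReal.toReal_pos hp.ne' hp'
  have hr' : 0 < 1 / p.toReal := by positivity
  set U : ℝ → ℝ≥0∞ := fun x => eSup ν (Ioo x b) u with hU
  have hm : Measurable fun x => (w x / U x) ^ p.toReal :=
    (hw.div (measurable_eSup_Ioo ν b u)).pow_const _
  have hint : ∫⁻ x in Ioo a b, (w x / U x) ^ p.toReal ∂μ < ⊤ :=
    (ENNReal.rpow_lt_top_iff_of_pos hr').1 hB
  set R := RHSdual ⊤ a b μ ν u g with hR
  have hRae : ∀ᵐ x ∂ν, x ∈ Ioo a b → u x * eSup μ (Ioo a x) g ≤ R := by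
    simpa [hR, RHSdual, Nrm] using
      ae_le_eSup ν (measurableSet_Ioo (a := a) (b := b)) (fun x => u x * eSup μ (Ioo a x) g)
  have hpt : ∀ᵐ t ∂μ.restrict (Ioo a b), g t * w t ≤ R * (w t / U t) := by
    filter_upwards [ae_restrict_of_ae (ae_le_eSup_left μ a g), ae_restrict_mem measurableSet_Ioo,
      ae_lt_top hm hint.ne] with t ht htI hfin
    have hUt : U t ≠ ⊤ :=
      ((eSup_mono_set u Ioo_subset_Ico_self).trans_lt (hu t htI)).ne
    have hfin' : w t / U t ≠ ⊤ := ((ENNReal.rpow_lt_top_iff_of_pos hr).1 hfin).ne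
    by_cases h0 : U t = 0
    · have hw0 : w t = 0 := by
        by_contra hne
        exact hfin' (by rw [h0, ENNReal.div_zero hne])
      simp [hw0]
    · have hUg : U t * g t ≤ R := by
        refine eSup_mul_le ?_
        filter_upwards [hRae] with x hx hxt
        exact (mul_le_mul_right (ht htI.1 x hxt.1) _).trans (hx ⟨htI.1.trans hxt.1, hxt.2⟩)
      calc g t * w t = g t * (U t * (w t / U t)) := by rw [ENNReal.mul_div_cancel h0 hUt]
        _ = U t * g t * (w t / U t) := by ring
        _ ≤ R * (w t / U t) := mul_le_mul_left hUg _
  have hle : ∫⁻ t in Ioo a b, (g t * w t) ^ p.toReal ∂μ ≤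
      R ^ p.toReal * ∫⁻ t in Ioo a b, (w t / U t) ^ p.toReal ∂μ := by
    rw [← lintegral_const_mul _ hm]
    refine lintegral_mono_ae ?_
    filter_upwards [hpt] with t ht
    rw [← ENNReal.mul_rpow_of_nonneg _ _ hr.le]
    exact ENNReal.rpow_le_rpow ht hr.le
  calc Nrm p μ (Ioo a b) (fun t => g t * w t)
      = (∫⁻ t in Ioo a b, (g t * w t) ^ p.toReal ∂μ) ^ (1 / p.toReal) := by simp [Nrm, hp']
    _ ≤ (R ^ p.toReal * ∫⁻ t in Ioo a b, (w t / U t) ^ p.toReal ∂μ) ^ (1 / p.toReal) :=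
        ENNReal.rpow_le_rpow hle hr'.le
    _ = _ := by
        rw [ENNReal.mul_rpow_of_nonneg _ _ hr'.le, ← ENNReal.rpow_mul, mul_one_div_cancel hr.ne',
          ENNReal.rpow_one, mul_comm]

/-- Lower bound for the best constant: testing with `g = 1 / ‖u‖_{∞,(·,b),ν}` shows that every
admissible constant is at least `B₃`. -/
lemma lower_bound {p : ℝ≥0∞} (hp' : p ≠ ⊤) {a b : ℝ} {μ ν : Measure ℝ}
    {w u : ℝ → ℝ≥0∞} {c : ℝ≥0∞}
    (hc : ∀ g : ℝ → ℝ≥0∞, Measurable g →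
      Nrm p μ (Ioo a b) (fun t => g t * w t) ≤ c * RHSdual ⊤ a b μ ν u g) :
    (∫⁻ x in Ioo a b, (w x / eSup ν (Ioo x b) u) ^ p.toReal ∂μ) ^ (1 / p.toReal) ≤ c := by
  have h := hc (fun x => (eSup ν (Ioo x b) u)⁻¹) (measurable_eSup_Ioo ν b u).inv
  have hR : RHSdual ⊤ a b μ ν u (fun x => (eSup ν (Ioo x b) u)⁻¹) ≤ 1 := by
    simp only [RHSdual, Nrm, if_true]
    refine eSup_le ?_
    filter_upwards [ae_le_eSup_right ν b u] with x hx hxI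
    have hG : eSup μ (Ioo a x) (fun x => (eSup ν (Ioo x b) u)⁻¹) ≤ (u x)⁻¹ :=
      eSup_le (Filter.Eventually.of_forall fun t ht => ENNReal.inv_le_inv.2 (hx hxI.2 t ht.2))
    -- This covers `u x = 0` too, where `u x * (u x)⁻¹ = 0 * ⊤ = 0`.
    exact (mul_le_mul_right hG _).trans (ENNReal.mul_inv_le_one _)
  calc _ = Nrm p μ (Ioo a b) (fun t => (eSup ν (Ioo t b) u)⁻¹ * w t) := by
        simp only [Nrm, hp', if_false, div_eq_mul_inv, mul_comm]
    _ ≤ c * 1 := h.trans (mul_le_mul_right hR _)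
    _ = c := mul_one c

/-- Theorem 4.1 (iii): for `0 < p < ∞` and `q = ∞`, the inequality
`‖gw‖_{p,(a,b),μ} ≤ c ‖u(x) ‖g‖_{∞,(a,x),μ}‖_{∞,(a,b),ν}` holds for all `g ∈ B⁺((a,b))`
iff `B₃ = (∫_{(a,b)} (w(x)/‖u‖_{∞,(x,b),ν})^p dμ(x))^{1/p} < ∞`, and the best constant
satisfies `c ≈ B₃`. -/
theorem statement10 (p : ℝ≥0∞) (hp : 0 < p) (hp' : p ≠ ⊤) :
    ∃ C₁ C₂ : ℝ≥0∞, 0 < C₁ ∧ C₂ < ⊤ ∧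
      ∀ (a b : ℝ), a < b →
      ∀ (μ ν : Measure ℝ) (w u : ℝ → ℝ≥0∞),
        Measurable w → Measurable u →
        (∀ t ∈ Ioo a b, eSup ν (Ico t b) u < ⊤) →
        (∀ᵐ x ∂ν.restrict (Ioo a b), u x ≠ 0) →
        ((∃ c : ℝ≥0∞, 0 < c ∧ c < ⊤ ∧ ∀ g : ℝ → ℝ≥0∞, Measurable g →
            Nrm p μ (Ioo a b) (fun t => g t * w t) ≤ c * RHSdual ⊤ a b μ ν u g) ↔
          (∫⁻ x in Ioo a b, (w x / eSup ν (Ioo x b) u) ^ p.toReal ∂μ) ^ (1 / p.toReal) < ⊤) ∧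
        C₁ * (∫⁻ x in Ioo a b, (w x / eSup ν (Ioo x b) u) ^ p.toReal ∂μ) ^ (1 / p.toReal) ≤
          bestCdual p ⊤ a b μ ν w u ∧
        bestCdual p ⊤ a b μ ν w u ≤
          C₂ * (∫⁻ x in Ioo a b, (w x / eSup ν (Ioo x b) u) ^ p.toReal ∂μ) ^ (1 / p.toReal) := by
  refine ⟨1, 1, one_pos, one_lt_top, fun a b _ μ ν w u hw _ hu _ => ⟨⟨?_, fun hB => ?_⟩, ?_, ?_⟩⟩
  · rintro ⟨c, -, hc, h⟩
    exact (lower_bound hp' h).trans_lt hc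
  -- Adding `1` keeps the constant positive when `B₃ = 0`.
  · refine ⟨_ + 1, by positivity, ENNReal.add_lt_top.2 ⟨hB, one_lt_top⟩, fun g _ =>
      (upper_bound hp hp' hw hu hB g).trans (mul_le_mul_left le_self_add _)⟩
  · rw [one_mul]
    exact le_sInf fun c hc => lower_bound hp' hc
  · rw [one_mul]
    rcases eq_top_or_lt_top
      ((∫⁻ x in Ioo a b, (w x / eSup ν (Ioo x b) u) ^ p.toReal ∂μ) ^ (1 / p.toReal)) with h | hB
    · rw [h]; exact le_top
    · exact sInf_le fun g _ => upper_bound hp hp' hw hu hB g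
end
end

section
/- Let μ and ν be non-negative Borel measures on I = (a,b) ⊆ ℝ and let u ∈ B⁺(I). Then for every g ∈ B⁺(I), the following exchange of essential suprema holds: ‖ u(x) · ‖g‖_{∞,(x,b),μ} ‖_{∞,(a,b),ν} = ‖ ‖u‖_{∞,(a,x),ν} · g(x) ‖_{∞,(a,b),μ}. -/
/-!
Up to exchanging the two measures and reversing the order of the line, it is enough to prove one
inequality, so the argument is carried out for a relation `R` which is either `<` or `>`.

If `c` lies below the left-hand side, then `{x | c < u x * G x}`, with `G x` the inner essential
supremum of `g`, has positive `ν`-measure. It is a countable union, over rational `s, t` with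
`c ≤ s * t`, of the sets `{x | s < u x, t < G x}`, so one of these has positive measure. The core
`exchange_pos` then says that for any two sets `P`, `Q`, if `ν`-positively many `x ∈ P` have
`μ`-positively many `y ∈ Q` beyond them, then `μ`-positively many `y ∈ Q` have `ν`-positively many
`x ∈ P` before them. With `P = {s < u}` and `Q = {t < g}` this gives that `c ≤ s * t` is at most
the right-hand side.

No Fubini theorem is involved, so the measures may be non-σ-finite: `exchange_pos` rests only on
the density of the rationals and on countable subadditivity.
-/

open MeasureTheory Set ENNReal

noncomputable section

theorem lt_eSup_imp {μ : Measure ℝ} {E : Set ℝ} {f : ℝ → ℝ≥0∞} {c : ℝ≥0∞} (h : c < eSup μ E f) :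
    0 < μ {y | y ∈ E ∧ c < f y} := by
  obtain ⟨α, hα, hc⟩ := lt_sSup_iff.1 h
  exact lt_of_lt_of_le hα (measure_mono fun y hy => ⟨hy.1, hc.trans_le hy.2⟩)

theorem le_eSup_of_pos {μ : Measure ℝ} {E : Set ℝ} {f : ℝ → ℝ≥0∞} {c : ℝ≥0∞}
    (h : 0 < μ {y | y ∈ E ∧ c ≤ f y}) : c ≤ eSup μ E f :=
  le_sSup h

theorem eSup_congr {μ : Measure ℝ} {E : Set ℝ} {f g : ℝ → ℝ≥0∞} (h : ∀ x ∈ E, f x = g x) :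
    eSup μ E f = eSup μ E g := by
  unfold eSup
  congr 1
  ext α
  have : {y | y ∈ E ∧ α ≤ f y} = {y | y ∈ E ∧ α ≤ g y} := by
    ext y
    exact and_congr_right fun hy => by rw [h y hy]
  simp only [mem_ofPred_eq, this]

/-- The points `x ∈ P` for which some rational `q` beyond `x` has a `ν`-null part of `P` before it
form a `ν`-null set. Any other `x ∈ P` has the property that every `y` beyond it has a
`ν`-positive part of `P` before it. -/
theorem exchange_pos (R : ℝ → ℝ → Prop) (htrans : ∀ x y z, R x y → R y z → R x z)
    (hdense : ∀ x y, R x y → ∃ q : ℚ, R x q ∧ R q y) (μ ν : Measure ℝ) (P Q : Set ℝ)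
    (h : 0 < ν {x | x ∈ P ∧ 0 < μ {y | y ∈ Q ∧ R x y}}) :
    0 < μ {y | y ∈ Q ∧ 0 < ν {x | x ∈ P ∧ R x y}} := by
  have hN : ν {x | ∃ q : ℚ, ν {z | z ∈ P ∧ R z q} = 0 ∧ x ∈ P ∧ R x q} = 0 := by
    rw [ofPred_exists, measure_iUnion_null_iff]
    intro q
    by_cases hq : ν {z | z ∈ P ∧ R z q} = 0
    · exact measure_mono_null (fun x hx => hx.2) hq
    · simp [hq]
  obtain ⟨x, ⟨hxP, hxμ⟩, hxN⟩ : ∃ x, x ∈ {x | x ∈ P ∧ 0 < μ {y | y ∈ Q ∧ R x y}} ∧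
      x ∉ {x | ∃ q : ℚ, ν {z | z ∈ P ∧ R z q} = 0 ∧ x ∈ P ∧ R x q} := by
    by_contra! hcon
    exact h.ne' (measure_mono_null hcon hN)
  refine lt_of_lt_of_le hxμ (measure_mono fun y hy => ⟨hy.1, ?_⟩)
  obtain ⟨q, hxq, hqy⟩ := hdense x y hy.2
  have hq : 0 < ν {z | z ∈ P ∧ R z q} :=
    pos_iff_ne_zero.2 fun h0 => hxN ⟨q, h0, hxP, hxq⟩
  exact lt_of_lt_of_le hq (measure_mono fun z hz => ⟨hz.1, htrans _ _ _ hz.2 hqy⟩)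

theorem exists_rat_mul {c A B : ℝ≥0∞} (h : c < A * B) :
    ∃ s t : ℚ, c ≤ ENNReal.ofReal s * ENNReal.ofReal t ∧
      ENNReal.ofReal s < A ∧ ENNReal.ofReal t < B := by
  obtain ⟨A', hA, B', hB, h⟩ : ∃ A' < A, ∃ B' < B, c < A' * B' := by
    by_contra! hcon
    exact h.not_ge (ENNReal.mul_le_of_forall_lt hcon)
  obtain ⟨s, -, hs, hs'⟩ := ENNReal.lt_iff_exists_rat_btwn.1 hA
  obtain ⟨t, -, ht, ht'⟩ := ENNReal.lt_iff_exists_rat_btwn.1 hB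
  exact ⟨s, t, h.le.trans (mul_le_mul' hs.le ht.le), hs', ht'⟩

/-- One inequality of the exchange formula, for an abstract relation `R` so that it can be used
with both `<` and `>`. -/
theorem eSup_exchange_le (R : ℝ → ℝ → Prop) (htrans : ∀ x y z, R x y → R y z → R x z)
    (hdense : ∀ x y, R x y → ∃ q : ℚ, R x q ∧ R q y) (I : Set ℝ) (μ ν : Measure ℝ)
    (u g : ℝ → ℝ≥0∞) :
    eSup ν I (fun x => u x * eSup μ {y | y ∈ I ∧ R x y} g) ≤
      eSup μ I (fun y => eSup ν {x | x ∈ I ∧ R x y} u * g y) := by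
  refine le_of_forall_lt_imp_le_of_dense fun c hc => ?_
  have h1 := lt_eSup_imp hc
  obtain ⟨s, t, hst, h2⟩ : ∃ s t : ℚ, c ≤ ENNReal.ofReal s * ENNReal.ofReal t ∧
      0 < ν {x | x ∈ I ∧ ENNReal.ofReal s < u x ∧
        ENNReal.ofReal t < eSup μ {y | y ∈ I ∧ R x y} g} := by
    by_contra! hcon
    refine h1.ne' (measure_mono_null (t := ⋃ (s : ℚ) (t : ℚ)
      (_ : c ≤ ENNReal.ofReal s * ENNReal.ofReal t), {x | x ∈ I ∧ ENNReal.ofReal s < u x ∧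
        ENNReal.ofReal t < eSup μ {y | y ∈ I ∧ R x y} g}) ?_ ?_)
    · rintro x ⟨hxI, hx⟩
      obtain ⟨s, t, h, hs, ht⟩ := exists_rat_mul hx
      simp only [mem_iUnion]
      exact ⟨s, t, h, hxI, hs, ht⟩
    · simp only [measure_iUnion_null_iff]
      exact fun s t h => nonpos_iff_eq_zero.1 (hcon s t h)
  have h3 := exchange_pos R htrans hdense μ ν {x | x ∈ I ∧ ENNReal.ofReal s < u x}
    {y | y ∈ I ∧ ENNReal.ofReal t < g y} (lt_of_lt_of_le h2 (measure_mono ?_))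
  · refine le_eSup_of_pos (lt_of_lt_of_le h3 (measure_mono ?_))
    rintro y ⟨⟨hyI, hy⟩, hν⟩
    refine ⟨hyI, hst.trans (mul_le_mul' (le_eSup_of_pos ?_) hy.le)⟩
    exact lt_of_lt_of_le hν (measure_mono fun x hx => ⟨⟨hx.1.1, hx.2⟩, hx.1.2.le⟩)
  · rintro x ⟨hxI, hs, ht⟩
    refine ⟨⟨hxI, hs⟩, lt_of_lt_of_le (lt_eSup_imp ht) (measure_mono ?_)⟩
    exact fun y hy => ⟨⟨hy.1.1, hy.2⟩, hy.1.2⟩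

/-- Exchange of essential suprema (formula (3.20)):
`‖u(x) ‖g‖_{∞,(x,b),μ}‖_{∞,(a,b),ν} = ‖‖u‖_{∞,(a,x),ν} g(x)‖_{∞,(a,b),μ}`
for all `g, u ∈ B⁺((a,b))`. -/
theorem statement14 (a b : ℝ) (hab : a < b) (μ ν : Measure ℝ)
    (u g : ℝ → ℝ≥0∞) (hu : Measurable u) (hg : Measurable g) :
    eSup ν (Ioo a b) (fun x => u x * eSup μ (Ioo x b) g) =
      eSup μ (Ioo a b) (fun x => eSup ν (Ioo a x) u * g x) := by
  have hL : ∀ x ∈ Ioo a b, u x * eSup μ (Ioo x b) g =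
      u x * eSup μ {y | y ∈ Ioo a b ∧ x < y} g := fun x hx => by
    congr 2
    ext y
    exact ⟨fun h => ⟨⟨hx.1.trans h.1, h.2⟩, h.1⟩, fun h => ⟨h.2, h.1.2⟩⟩
  have hR : ∀ y ∈ Ioo a b, eSup ν (Ioo a y) u * g y =
      eSup ν {x | x ∈ Ioo a b ∧ x < y} u * g y := fun y hy => by
    congr 2
    ext x
    exact ⟨fun h => ⟨⟨h.1, h.2.trans hy.2⟩, h.2⟩, fun h => ⟨h.1.1, h.2⟩⟩
  rw [eSup_congr hL, eSup_congr hR]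
  refine le_antisymm ?_ ?_
  · exact eSup_exchange_le (fun x y => x < y) (fun _ _ _ => lt_trans)
      (fun _ _ h => exists_rat_btwn h) (Ioo a b) μ ν u g
  · have h := eSup_exchange_le (fun x y => y < x) (fun _ _ _ h h' => lt_trans h' h)
      (fun _ _ h => (exists_rat_btwn h).imp fun _ hq => hq.symm) (Ioo a b) ν μ g u
    simpa only [mul_comm] using h
end
end
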